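/- arXiv:1601.03174 — 2 statements merged into one kernel-verified Lean document; each statement's English description precedes it below -/
import Mathlib

section
/- Let Δ be a nonnegative integer, let G be a graph with maximum degree at most Δ, let W ⊆ V(G), let h = Δ+2, and let G' be the graph obtained from the induced subgraph G[W] by adding h new pairwise adjacent vertices v_1, …, v_h and, for every u ∈ W with r = |N_G(u)∖W| ≥ 1, adding the edges uv_1, …, uv_r. Let τ be any multiset of nonnegative integers equal to the multiset {d_{G'}(v_1), …, d_{G'}(v_h)} together with a multiset of integers each at most Δ. Then for every set A of unordered pairs of distinct non-adjacent vertices of G' such that the degree multiset of G'+A equals τ, every pair in A has both of its endpoints in W. -/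
/-- The degree of a vertex, as the `ncard` of its neighbor set. -/
noncomputable def ndeg {V : Type*} (H : SimpleGraph V) (v : V) : ℕ :=
  (H.neighborSet v).ncard

/-- The graph obtained from `G[W]` by adding `h` new pairwise adjacent vertices
`v_1, …, v_h` (here indexed by `Fin h`) and joining every `u ∈ W` to
`v_1, …, v_r`, where `r = |N_G(u) ∖ W|`. -/
def kernelGraph {V : Type*} (G : SimpleGraph V) (W : Finset V) (h : ℕ) :
    SimpleGraph (↥W ⊕ Fin h) where
  Adj x y :=
    match x, y with
    | Sum.inl u, Sum.inl w => G.Adj ↑u ↑w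
    | Sum.inl u, Sum.inr j => (j : ℕ) < ((G.neighborSet ↑u) \ ↑W).ncard
    | Sum.inr j, Sum.inl u => (j : ℕ) < ((G.neighborSet ↑u) \ ↑W).ncard
    | Sum.inr i, Sum.inr j => i ≠ j
  symm := by
    refine ⟨?_⟩
    rintro (u | i) (w | j) hxy
    · exact hxy.symm
    · exact hxy
    · exact hxy
    · exact hxy.symm
  loopless := by
    refine ⟨?_⟩
    rintro (u | i) hxy
    · exact G.loopless.irrefl _ hxy
    · exact hxy rfl

/-!
Adding edges never lowers a degree, and every new vertex, lying in a clique of size `Δ + 2`,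
already has degree larger than `Δ`. So the degrees of the new vertices in `G' + A` all
exceed `Δ` and must be matched inside the part of `τ` listing the degrees of the new
vertices in `G'`. Hence these two lists coincide as multisets, have the same sum, and so
agree vertex by vertex: no new vertex gains an edge.
-/

theorem multiset_le_of_le_add_of_disjoint {α : Type*} {s t u : Multiset α} (h : s ≤ t + u)
    (hsu : Disjoint s u) : s ≤ t := by
  classical
  refine Multiset.le_iff_count.2 fun a => ?_
  by_cases ha : a ∈ s
  · have hu : u.count a = 0 := Multiset.count_eq_zero.2 (Multiset.disjoint_left.1 hsu ha)
    simpa only [Multiset.count_add, hu, add_zero] using Multiset.count_le_of_le a h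
  · exact (Multiset.count_eq_zero.2 ha).trans_le (Nat.zero_le _)

theorem eq_of_le_of_multiset_map_le_map {ι M : Type*} [AddCommMonoid M] [PartialOrder M]
    [IsOrderedCancelAddMonoid M] {s : Finset ι} {f g : ι → M} (hfg : ∀ i ∈ s, f i ≤ g i)
    (h : s.val.map g ≤ s.val.map f) : ∀ i ∈ s, f i = g i := by
  have hmap : s.val.map g = s.val.map f := Multiset.eq_of_le_of_card_le h (by simp)
  exact (Finset.sum_eq_sum_iff_of_le hfg).1 (congrArg Multiset.sum hmap.symm)

section Degrees

variable {V : Type*} {H K : SimpleGraph V}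

theorem ndeg_le_ndeg_of_le (hKH : K ≤ H) {v : V} (hfin : (H.neighborSet v).Finite) :
    ndeg K v ≤ ndeg H v :=
  Set.ncard_le_ncard (fun _ hw => hKH hw) hfin

theorem neighborSet_eq_of_le_of_ndeg_eq (hKH : K ≤ H) {v : V} (hfin : (H.neighborSet v).Finite)
    (hdeg : ndeg K v = ndeg H v) : K.neighborSet v = H.neighborSet v :=
  Set.eq_of_subset_of_ncard_le (fun _ hw => hKH hw) hdeg.ge hfin

theorem neighborSet_eq_of_map_ndeg_le (hKH : K ≤ H) {S : Finset V}
    (hfin : ∀ v ∈ S, (H.neighborSet v).Finite) {d : ℕ} (hd : ∀ v ∈ S, d < ndeg K v)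
    {ρ : Multiset ℕ} (hρ : ∀ x ∈ ρ, x ≤ d)
    (hmap : S.val.map (ndeg H) ≤ S.val.map (ndeg K) + ρ) :
    ∀ v ∈ S, K.neighborSet v = H.neighborSet v := by
  have hmono : ∀ v ∈ S, ndeg K v ≤ ndeg H v := fun v hv => ndeg_le_ndeg_of_le hKH (hfin v hv)
  have hdisj : Disjoint (S.val.map (ndeg H)) ρ := by
    refine Multiset.disjoint_left.2 fun {x} hx hxρ => ?_
    obtain ⟨v, hv, rfl⟩ := Multiset.mem_map.1 hx
    exact ((hd v hv).trans_le (hmono v hv)).not_ge (hρ _ hxρ)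
  have hdeg : ∀ v ∈ S, ndeg K v = ndeg H v :=
    eq_of_le_of_multiset_map_le_map hmono (multiset_le_of_le_add_of_disjoint hmap hdisj)
  exact fun v hv => neighborSet_eq_of_le_of_ndeg_eq hKH (hfin v hv) (hdeg v hv)

theorem notMem_of_neighborSet_eq_sup_fromEdgeSet {A : Set (Sym2 V)} {v : V}
    (hv : K.neighborSet v = (K ⊔ SimpleGraph.fromEdgeSet A).neighborSet v)
    {e : Sym2 V} (he : e ∈ A) (hdiag : ¬ e.IsDiag) (hK : e ∉ K.edgeSet) : v ∉ e := by
  intro hve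
  obtain ⟨w, rfl⟩ := Sym2.mem_iff_exists.1 hve
  have hw : w ∈ (K ⊔ SimpleGraph.fromEdgeSet A).neighborSet v :=
    Or.inr ((SimpleGraph.fromEdgeSet_adj A).2 ⟨he, hdiag⟩)
  rw [← hv] at hw
  exact hK hw

end Degrees

section KernelGraph

variable {V : Type*} (G : SimpleGraph V) (W : Finset V)

theorem le_ndeg_kernelGraph_inr_add_one {h : ℕ} (j : Fin h) :
    h ≤ ndeg (kernelGraph G W h) (Sum.inr j) + 1 := by
  have hclique : Sum.inr '' {j}ᶜ ⊆ (kernelGraph G W h).neighborSet (Sum.inr j) := by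
    rintro _ ⟨i, hi, rfl⟩
    exact Ne.symm hi
  have hcard : (Sum.inr '' {j}ᶜ : Set (↥W ⊕ Fin h)).ncard = h - 1 := by
    rw [Set.ncard_image_of_injective _ Sum.inr_injective, Set.ncard_compl, Set.ncard_singleton,
      Nat.card_fin]
  exact Nat.sub_le_iff_le_add.1 (hcard ▸ Set.ncard_le_ncard hclique (Set.toFinite _))

theorem added_edges_avoid_new_vertices_general {Δ h : ℕ} (hh : Δ + 2 ≤ h)
    {ρ : Multiset ℕ} (hρ : ∀ x ∈ ρ, x ≤ Δ) {A : Set (Sym2 (↥W ⊕ Fin h))}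
    (hA : ∀ e ∈ A, ¬ e.IsDiag ∧ e ∉ (kernelGraph G W h).edgeSet)
    (hdeg : (Finset.univ.val.map fun v : ↥W ⊕ Fin h =>
        ndeg (kernelGraph G W h ⊔ SimpleGraph.fromEdgeSet A) v) =
      ((Finset.univ : Finset (Fin h)).val.map fun j =>
        ndeg (kernelGraph G W h) (Sum.inr j)) + ρ) :
    ∀ e ∈ A, ∀ x ∈ e, ∃ u : ↥W, x = Sum.inl u := by
  let newVertices : Finset (↥W ⊕ Fin h) := Finset.univ.map Function.Embedding.inr
  have hlarge : ∀ v ∈ newVertices, Δ < ndeg (kernelGraph G W h) v := by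
    intro v hv
    obtain ⟨j, -, rfl⟩ := Finset.mem_map.1 hv
    exact Nat.lt_of_succ_lt_succ (hh.trans (le_ndeg_kernelGraph_inr_add_one G W j))
  have hmap : newVertices.val.map (ndeg (kernelGraph G W h ⊔ SimpleGraph.fromEdgeSet A)) ≤
      newVertices.val.map (ndeg (kernelGraph G W h)) + ρ := by
    rw [Finset.map_val Function.Embedding.inr, Multiset.map_map (ndeg (kernelGraph G W h))]
    exact (Multiset.map_le_map (Finset.val_le_iff.2 newVertices.subset_univ)).trans_eq hdeg
  have hnbr : ∀ v ∈ newVertices, (kernelGraph G W h).neighborSet v =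
      (kernelGraph G W h ⊔ SimpleGraph.fromEdgeSet A).neighborSet v :=
    neighborSet_eq_of_map_ndeg_le le_sup_left (fun _ _ => Set.toFinite _) hlarge hρ hmap
  rintro e he (u | j) hx
  · exact ⟨u, rfl⟩
  · have hj : Sum.inr j ∈ newVertices := Finset.mem_map_of_mem _ (Finset.mem_univ j)
    obtain ⟨hdiag, hK⟩ := hA e he
    exact absurd hx (notMem_of_neighborSet_eq_sup_fromEdgeSet (hnbr _ hj) he hdiag hK)

end KernelGraph

theorem added_edges_avoid_new_vertices
    {V : Type*} [Fintype V] [DecidableEq V] (G : SimpleGraph V)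
    (Δ : ℕ) (hG : ∀ v : V, ndeg G v ≤ Δ) (W : Finset V)
    (τ ρ : Multiset ℕ) (hρ : ∀ x ∈ ρ, x ≤ Δ)
    (hτ : τ = ((Finset.univ : Finset (Fin (Δ + 2))).val.map fun j =>
        ndeg (kernelGraph G W (Δ + 2)) (Sum.inr j)) + ρ)
    (A : Finset (Sym2 (↥W ⊕ Fin (Δ + 2))))
    (hA : ∀ e ∈ A, ¬ e.IsDiag ∧ e ∉ (kernelGraph G W (Δ + 2)).edgeSet)
    (hdeg : (Finset.univ.val.map fun v : ↥W ⊕ Fin (Δ + 2) =>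
        ndeg (kernelGraph G W (Δ + 2) ⊔ SimpleGraph.fromEdgeSet ↑A) v) = τ) :
    ∀ e ∈ A, ∀ x ∈ e, ∃ u : ↥W, x = Sum.inl u :=
  added_edges_avoid_new_vertices_general G W le_rfl hρ hA (hdeg.trans hτ)
end

section
/- Let k ≥ 2 and d − (k−1) ≥ 3, let G_1, …, G_t be d-regular graphs each with n vertices and m edges, and let G' be the subdivision of the disjoint union of G_1, …, G_t. Then some G_i contains a clique on k vertices if and only if there exists a vertex set U ⊆ V(G') with |U| ≤ k(k−1)/2 such that the degree multiset of G'−U consists of nt−k copies of d, k copies of d−(k−1), and mt − k(k−1)/2 copies of 2. -/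
/-- The disjoint union of the family of graphs `Gs 0, …, Gs (t-1)`, realized on the
vertex set `Fin t × V`. -/
def disjUnion {t : ℕ} {V : Type*} (Gs : Fin t → SimpleGraph V) :
    SimpleGraph (Fin t × V) where
  Adj x y := x.1 = y.1 ∧ (Gs x.1).Adj x.2 y.2
  symm := by
    refine ⟨?_⟩
    rintro ⟨i, u⟩ ⟨j, w⟩ ⟨h, hadj⟩
    cases h
    exact ⟨rfl, hadj.symm⟩
  loopless := by
    refine ⟨?_⟩
    rintro ⟨i, u⟩ ⟨-, hadj⟩
    exact (Gs i).loopless.irrefl u hadj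

instance {t : ℕ} {V : Type*} [DecidableEq V] (Gs : Fin t → SimpleGraph V)
    [∀ i, DecidableRel (Gs i).Adj] : DecidableRel (disjUnion Gs).Adj := fun x y =>
  inferInstanceAs (Decidable (x.1 = y.1 ∧ (Gs x.1).Adj x.2 y.2))

/-- The subdivision of a graph `G`: every edge `uv` is replaced by a new vertex
(the corresponding element of `G.edgeSet`) adjacent exactly to `u` and `v`. -/
def subdiv {V : Type*} (G : SimpleGraph V) : SimpleGraph (V ⊕ G.edgeSet) where
  Adj x y :=
    match x, y with
    | Sum.inl u, Sum.inr e => u ∈ (e : Sym2 V)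
    | Sum.inr e, Sum.inl u => u ∈ (e : Sym2 V)
    | _, _ => False
  symm := by refine ⟨?_⟩; rintro (u | e) (w | f) h <;> exact h
  loopless := by refine ⟨?_⟩; rintro (u | e) h <;> exact h

/-!
Original vertices of a graph `G` are adjacent in the subdivision only to subdivision vertices, so
deleting vertices `U` leaves each remaining original vertex with its degree in the spanning
subgraph `H` of `G` obtained by removing the edges whose subdivision vertex lies in `U`.
If `G` is `d`-regular and `K` is a `k`-clique, removing the edges inside `K` lowers exactly the
degrees in `K`, each by `k - 1`, which gives one direction.

Conversely, as `d - (k - 1) ≥ 3` while subdivision vertices have degree at most two, the prescribed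
multiset forces all original vertices to survive, with `k` of them losing `k - 1` edges each and the
others none. Every removed edge then joins two of these `k` vertices, so they form a clique.
-/

open Finset

section Multiplicity

variable {α β : Type*} [Fintype α] {f : α → β} {x y : β} {k : ℕ}

theorem map_univ_eq_replicate_add_replicate {S : Finset α} (hy : ∀ a ∈ S, f a = y)
    (hx : ∀ a ∉ S, f a = x) :
    univ.val.map f = .replicate (Fintype.card α - #S) x + .replicate #S y := by
  classical
  have hsplit : (univ : Finset α).val = Sᶜ.val + S.val := by
    rw [← union_compl S, union_comm, ← disjUnion_eq_union _ _ disjoint_compl_left, disjUnion_val]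
  rw [hsplit, Multiset.map_add,
    Multiset.map_congr rfl fun a ha => hx a (mem_compl.1 ha), Multiset.map_congr rfl hy]
  simp [card_compl]

theorem exists_card_eq_of_map_univ_eq_replicate_add_replicate {l : ℕ} (hxy : x ≠ y)
    (h : univ.val.map f = .replicate l x + .replicate k y) :
    ∃ S : Finset α, #S = k ∧ (∀ a ∈ S, f a = y) ∧ ∀ a ∉ S, f a = x := by
  classical
  refine ⟨univ.filter (y = f ·), ?_, by simp [eq_comm], fun a ha => ?_⟩
  · have hcount := congrArg (Multiset.count y) h
    rwa [Multiset.count_map, Multiset.count_add, Multiset.count_replicate, if_neg hxy, zero_add,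
      Multiset.count_replicate_self] at hcount
  · have hmem : f a ∈ univ.val.map f := Multiset.mem_map_of_mem f (mem_univ a)
    rw [h, Multiset.mem_add] at hmem
    exact hmem.elim Multiset.eq_of_mem_replicate
      fun hy => absurd (Multiset.eq_of_mem_replicate hy) (by simpa [eq_comm] using ha)

end Multiplicity

section Ndeg

variable {V : Type*}

theorem ndeg_eq_degree (G : SimpleGraph V) (v : V) [Fintype (G.neighborSet v)] :
    ndeg G v = G.degree v := by
  rw [ndeg, Set.ncard_eq_toFinset_card', SimpleGraph.degree, SimpleGraph.neighborFinset]

theorem sum_ndeg_eq_two_mul_ncard_edgeSet [Fintype V] (G : SimpleGraph V) :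
    ∑ v, ndeg G v = 2 * G.edgeSet.ncard := by
  classical
  simp only [ndeg_eq_degree, G.sum_degrees_eq_twice_card_edges, ← SimpleGraph.coe_edgeFinset,
    Set.ncard_coe_finset]

end Ndeg

section DegreeDrop

variable {V : Type*} {G H : SimpleGraph V}

theorem ndeg_lt_ndeg_of_le_of_adj [Finite V] (hle : H ≤ G) {v w : V} (hG : G.Adj v w)
    (hH : ¬ H.Adj v w) : ndeg H v < ndeg G v :=
  Set.ncard_lt_ncard ⟨fun _ h => hle h, fun hsub => hH (hsub hG)⟩

-- `v ∈ S` only loses neighbors in `S.erase v`, of size `#S - 1`: it must have had all of them.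
theorem isClique_of_ndeg_add_card_sub_one_le [Finite V] (hle : H ≤ G) {S : Finset V}
    (hmem : ∀ v ∈ S, ndeg H v + (#S - 1) ≤ ndeg G v) (hnotMem : ∀ v ∉ S, ndeg H v = ndeg G v) :
    G.IsClique S := by
  classical
  intro v hv w hw hvw
  have hlost : G.neighborSet v \ H.neighborSet v ⊆ (S.erase v : Finset V) := by
    rintro u ⟨hG, hH⟩
    refine mem_erase.2 ⟨hG.ne', ?_⟩
    by_contra hu
    exact (ndeg_lt_ndeg_of_le_of_adj hle hG.symm fun h => hH h.symm).ne (hnotMem u hu)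
  have hcard : #(S.erase v) ≤ (G.neighborSet v \ H.neighborSet v).ncard := by
    have hsplit : (G.neighborSet v \ H.neighborSet v).ncard + ndeg H v = ndeg G v :=
      Set.ncard_sdiff_add_ncard_of_subset fun _ h => hle h
    have := hmem v hv
    rw [card_erase_of_mem hv]
    omega
  have hall := Set.eq_of_subset_of_ncard_le hlost (by rwa [Set.ncard_coe_finset])
  have hw' : w ∈ G.neighborSet v \ H.neighborSet v := by
    rw [hall]
    exact mem_erase.2 ⟨hvw.symm, hw⟩
  exact hw'.1

theorem ndeg_deleteEdges_sym2_of_mem {K : Finset V} (hK : G.IsClique K) {v : V} (hv : v ∈ K) :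
    ndeg (G.deleteEdges K.sym2) v = ndeg G v - (#K - 1) := by
  classical
  have hnbr : (G.deleteEdges K.sym2).neighborSet v = G.neighborSet v \ (K.erase v : Finset V) := by
    ext w
    have hne : G.Adj v w → w ≠ v := fun h => h.ne'
    simp only [SimpleGraph.mem_neighborSet, SimpleGraph.deleteEdges_adj, Set.mem_sdiff, mem_coe,
      mk_mem_sym2_iff, mem_erase]
    tauto
  have hsub : ((K.erase v : Finset V) : Set V) ⊆ G.neighborSet v := fun w hw =>
    hK hv (mem_of_mem_erase hw) (ne_of_mem_erase hw).symm
  rw [ndeg, hnbr, Set.ncard_sdiff hsub, Set.ncard_coe_finset, card_erase_of_mem hv, ndeg]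

theorem ndeg_deleteEdges_sym2_of_notMem {K : Finset V} {v : V} (hv : v ∉ K) :
    ndeg (G.deleteEdges K.sym2) v = ndeg G v := by
  simp only [ndeg, SimpleGraph.neighborSet, SimpleGraph.deleteEdges_adj, mem_coe, mk_mem_sym2_iff,
    hv, false_and, not_false_eq_true, and_true]

open Classical in
/-- The edges of `G` with both ends in `K`; when `K` is a clique, their subdivision vertices form
the set to delete. -/
noncomputable def edgesWithin (G : SimpleGraph V) (K : Finset V) : Finset G.edgeSet :=
  K.sym2.subtype (· ∈ G.edgeSet)

theorem card_edgesWithin_of_isClique {K : Finset V} (hK : G.IsClique K) :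
    #(edgesWithin G K) = (#K).choose 2 := by
  classical
  rw [← Sym2.card_image_offDiag, edgesWithin, card_subtype]
  congr 1
  ext e
  induction e with | _ v w =>
  simp only [mem_filter, mk_mem_sym2_iff, SimpleGraph.mem_edgeSet, mem_image, mem_offDiag]
  constructor
  · rintro ⟨⟨hv, hw⟩, hadj⟩
    exact ⟨(v, w), ⟨hv, hw, hadj.ne⟩, rfl⟩
  · rintro ⟨⟨a, b⟩, ⟨ha, hb, hab⟩, hvw⟩
    have hadj := hK ha hb hab
    rcases Sym2.eq_iff.1 hvw with ⟨rfl, rfl⟩ | ⟨rfl, rfl⟩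
    exacts [⟨⟨ha, hb⟩, hadj⟩, ⟨⟨hb, ha⟩, hadj.symm⟩]

end DegreeDrop

section VertexDeletion

variable {V : Type*}

/-- The degree of `v ∉ U` in `G - U`, in terms of `G` itself so that no subtype is needed. -/
noncomputable def degreeAfterDeletion (G : SimpleGraph V) (U : Set V) (v : V) : ℕ :=
  (G.neighborSet v \ U).ncard

/-- The degree multiset of `G - U`. -/
noncomputable def degreesAfterDeletion [Fintype V] [DecidableEq V] (G : SimpleGraph V)
    (U : Finset V) : Multiset ℕ :=
  (univ \ U).val.map (degreeAfterDeletion G U)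

end VertexDeletion

section Subdivision

variable {V : Type*} {G : SimpleGraph V}

/-- What remains of `G` when the vertices `U` of its subdivision are deleted: all vertices of `G`,
and the edges whose subdivision vertex is not in `U`. -/
def survivingGraph (G : SimpleGraph V) (U : Finset (V ⊕ G.edgeSet)) : SimpleGraph V :=
  G.deleteEdges (Subtype.val '' (U.toRight : Set G.edgeSet))

theorem survivingGraph_adj {U : Finset (V ⊕ G.edgeSet)} {v w : V} :
    (survivingGraph G U).Adj v w ↔ ∃ h : G.Adj v w, .inr ⟨s(v, w), h⟩ ∉ U := by
  simp only [survivingGraph, SimpleGraph.deleteEdges_adj, Set.mem_image, mem_coe, mem_toRight,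
    Subtype.exists, exists_and_right, exists_eq_right, not_exists]
  exact ⟨fun ⟨h, hU⟩ => ⟨h, hU h⟩, fun ⟨h, hU⟩ => ⟨h, fun _ => hU⟩⟩

theorem survivingGraph_edgesWithin (K : Finset V) :
    survivingGraph G ((edgesWithin G K).map .inr) = G.deleteEdges K.sym2 := by
  ext v w
  simp [survivingGraph_adj, edgesWithin, SimpleGraph.deleteEdges_adj]

theorem degreeAfterDeletion_subdiv_inl (U : Finset (V ⊕ G.edgeSet)) (v : V) :
    degreeAfterDeletion (subdiv G) U (.inl v) = ndeg (survivingGraph G U) v := by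
  symm
  refine Set.ncard_congr (fun w hw => .inr ⟨s(v, w), hw.1⟩) ?_ ?_ ?_
  · intro w hw
    obtain ⟨_, hU⟩ := survivingGraph_adj.1 hw
    exact ⟨Sym2.mem_mk_left v w, hU⟩
  · intro w w' _ _ h
    exact Sym2.congr_right.1 (congrArg Subtype.val (Sum.inr.inj h))
  · rintro (w | ⟨e, he⟩) ⟨hadj, hU⟩
    · exact hadj.elim
    · obtain ⟨w, rfl⟩ := hadj
      exact ⟨w, survivingGraph_adj.2 ⟨he, hU⟩, rfl⟩

theorem ncard_neighborSet_subdiv_inr (e : G.edgeSet) :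
    ((subdiv G).neighborSet (.inr e)).ncard = 2 := by
  obtain ⟨e, he⟩ := e
  induction e with | _ v w =>
  have hends : (subdiv G).neighborSet (.inr ⟨s(v, w), he⟩) = {.inl v, .inl w} := by
    ext (u | f)
    · change u ∈ s(v, w) ↔ _
      simp
    · change False ↔ _
      simp
  rw [hends, Set.ncard_pair (by simpa using he.ne)]

theorem degreeAfterDeletion_subdiv_inr_le (U : Set (V ⊕ G.edgeSet)) (e : G.edgeSet) :
    degreeAfterDeletion (subdiv G) U (.inr e) ≤ 2 := by
  have hcard := ncard_neighborSet_subdiv_inr e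
  have hfinite : ((subdiv G).neighborSet (.inr e)).Finite :=
    Set.finite_of_ncard_ne_zero (by omega)
  exact (Set.ncard_le_ncard Set.sdiff_subset hfinite).trans_eq hcard

theorem degreeAfterDeletion_subdiv_inr_of_inl_notMem {U : Set (V ⊕ G.edgeSet)}
    (hU : ∀ v, .inl v ∉ U) (e : G.edgeSet) :
    degreeAfterDeletion (subdiv G) U (.inr e) = 2 := by
  have hdisj : Disjoint ((subdiv G).neighborSet (.inr e)) U := by
    rw [Set.disjoint_left]
    rintro (v | f) hadj
    exacts [hU v, hadj.elim]
  rw [degreeAfterDeletion, hdisj.sdiff_eq_left, ncard_neighborSet_subdiv_inr]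

variable [Fintype V] [DecidableEq V] [Fintype G.edgeSet]

theorem degreesAfterDeletion_subdiv (U : Finset (V ⊕ G.edgeSet)) :
    degreesAfterDeletion (subdiv G) U =
      U.toLeftᶜ.val.map (ndeg (survivingGraph G U)) +
        U.toRightᶜ.val.map fun e => degreeAfterDeletion (subdiv G) U (.inr e) := by
  have hsplit : univ \ U = U.toLeftᶜ.disjSum U.toRightᶜ := by
    ext (v | e) <;> simp
  rw [degreesAfterDeletion, hsplit, val_disjSum, Multiset.disjSum, Multiset.map_add,
    Multiset.map_map, Multiset.map_map]
  simp only [Function.comp_def, degreeAfterDeletion_subdiv_inl]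

theorem degreesAfterDeletion_subdiv_edgesWithin (K : Finset V) :
    degreesAfterDeletion (subdiv G) ((edgesWithin G K).map .inr) =
      univ.val.map (ndeg (G.deleteEdges K.sym2)) +
        .replicate (Fintype.card G.edgeSet - #(edgesWithin G K)) 2 := by
  rw [degreesAfterDeletion_subdiv, survivingGraph_edgesWithin, ← empty_disjSum, toLeft_disjSum,
    toRight_disjSum, compl_empty, Multiset.map_congr rfl fun e _ =>
      degreeAfterDeletion_subdiv_inr_of_inl_notMem (by simp) e,
    Multiset.map_const', card_val, card_compl]

-- Only original vertices have degree above two, and `D` is too large for one to be missing.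
theorem map_ndeg_survivingGraph_eq {U : Finset (V ⊕ G.edgeSet)} {D : Multiset ℕ} {c : ℕ}
    (hU : degreesAfterDeletion (subdiv G) U = D + .replicate c 2) (hD : ∀ x ∈ D, 3 ≤ x)
    (hcard : Fintype.card V ≤ D.card) :
    univ.val.map (ndeg (survivingGraph G U)) = D := by
  rw [degreesAfterDeletion_subdiv] at hU
  have hsubdiv : (U.toRightᶜ.val.map fun e =>
      degreeAfterDeletion (subdiv G) U (.inr e)).filter (3 ≤ ·) = 0 := by
    simp only [Multiset.filter_eq_nil, Multiset.mem_map, not_le, Nat.lt_succ_iff]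
    rintro _ ⟨e, -, rfl⟩
    exact degreeAfterDeletion_subdiv_inr_le U e
  have hreplicate : (Multiset.replicate c 2).filter (3 ≤ ·) = 0 := by
    simp [Multiset.filter_eq_nil, Multiset.mem_replicate]
  have hlarge := congrArg (Multiset.filter (3 ≤ ·)) hU
  rw [Multiset.filter_add, Multiset.filter_add, Multiset.filter_eq_self.2 hD,
    hsubdiv, hreplicate, add_zero, add_zero] at hlarge
  refine (Multiset.eq_of_le_of_card_le ?_ (by simpa using hcard)).symm
  rw [← hlarge]
  exact (Multiset.filter_le _ _).trans (Multiset.map_le_map (val_le_iff.2 (subset_univ _)))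

end Subdivision

section Regular

variable {V : Type*} [Fintype V] [DecidableEq V] {G : SimpleGraph V} [Fintype G.edgeSet] {d k : ℕ}

theorem degreesAfterDeletion_subdiv_edgesWithin_of_isNClique (hreg : ∀ v, ndeg G v = d)
    {K : Finset V} (hK : G.IsNClique k K) :
    degreesAfterDeletion (subdiv G) ((edgesWithin G K).map .inr) =
      .replicate (Fintype.card V - k) d + .replicate k (d - (k - 1)) +
        .replicate (Fintype.card G.edgeSet - k.choose 2) 2 := by
  obtain ⟨hclique, rfl⟩ := hK
  rw [degreesAfterDeletion_subdiv_edgesWithin, card_edgesWithin_of_isClique hclique,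
    map_univ_eq_replicate_add_replicate (S := K)]
  · intro v hv
    rw [ndeg_deleteEdges_sym2_of_mem hclique hv, hreg]
  · intro v hv
    rw [ndeg_deleteEdges_sym2_of_notMem hv, hreg]

theorem exists_isNClique_of_degreesAfterDeletion_subdiv (hk : 2 ≤ k) (hd : 3 ≤ d - (k - 1))
    (hreg : ∀ v, ndeg G v = d) {U : Finset (V ⊕ G.edgeSet)} {c : ℕ}
    (hU : degreesAfterDeletion (subdiv G) U =
      .replicate (Fintype.card V - k) d + .replicate k (d - (k - 1)) + .replicate c 2) :
    ∃ K : Finset V, G.IsNClique k K := by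
  have hdeg := map_ndeg_survivingGraph_eq hU
    (by
      intro x hx
      rcases Multiset.mem_add.1 hx with hx | hx <;> rw [Multiset.eq_of_mem_replicate hx] <;> omega)
    (by simp only [Multiset.card_add, Multiset.card_replicate]; omega)
  obtain ⟨S, hS, hmem, hnotMem⟩ :=
    exists_card_eq_of_map_univ_eq_replicate_add_replicate (by omega) hdeg
  refine ⟨S, isClique_of_ndeg_add_card_sub_one_le (G.deleteEdges_le _) (fun v hv => ?_)
    fun v hv => (hnotMem v hv).trans (hreg v).symm, hS⟩
  rw [hS, ← survivingGraph, hmem v hv, hreg]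
  omega

end Regular

section DisjUnion

variable {t : ℕ} {V : Type*} (Gs : Fin t → SimpleGraph V)

theorem ndeg_disjUnion (i : Fin t) (v : V) : ndeg (disjUnion Gs) (i, v) = ndeg (Gs i) v := by
  have hnbr : (disjUnion Gs).neighborSet (i, v) = Prod.mk i '' (Gs i).neighborSet v := by
    ext ⟨j, w⟩
    change i = j ∧ (Gs i).Adj v w ↔ _
    simp [and_comm]
  rw [ndeg, hnbr, Set.ncard_image_of_injective _ (Prod.mk_right_injective i), ndeg]

theorem ncard_edgeSet_disjUnion [Finite V] :
    (disjUnion Gs).edgeSet.ncard = ∑ i, (Gs i).edgeSet.ncard := by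
  have := Fintype.ofFinite V
  have hsum : 2 * (disjUnion Gs).edgeSet.ncard = 2 * ∑ i, (Gs i).edgeSet.ncard := by
    simp only [mul_sum, ← sum_ndeg_eq_two_mul_ncard_edgeSet, Fintype.sum_prod_type, ndeg_disjUnion]
  omega

variable {Gs}

theorem fst_eq_of_isClique_disjUnion {s : Set (Fin t × V)} (hs : (disjUnion Gs).IsClique s)
    {x y : Fin t × V} (hx : x ∈ s) (hy : y ∈ s) : x.1 = y.1 := by
  by_cases hxy : x = y
  · rw [hxy]
  · exact (hs hx hy hxy).1

theorem exists_isNClique_disjUnion_iff {k : ℕ} (hk : k ≠ 0) :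
    (∃ K, (disjUnion Gs).IsNClique k K) ↔ ∃ i, ∃ K, (Gs i).IsNClique k K := by
  classical
  constructor
  · rintro ⟨K, hK⟩
    obtain ⟨⟨i, v⟩, hv⟩ : K.Nonempty := card_ne_zero.1 (hK.card_eq ▸ hk)
    have hfst : ∀ x ∈ K, x.1 = i := fun x hx => fst_eq_of_isClique_disjUnion hK.isClique hx hv
    refine ⟨i, K.image Prod.snd, ?_, ?_⟩
    · simp only [coe_image]
      rintro _ ⟨x, hx, rfl⟩ _ ⟨y, hy, rfl⟩ hne
      exact hfst x hx ▸ (hK.isClique hx hy (ne_of_apply_ne _ hne)).2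
    · rw [card_image_of_injOn, hK.card_eq]
      exact fun x hx y hy h => Prod.ext ((hfst x hx).trans (hfst y hy).symm) h
  · rintro ⟨i, K, hK⟩
    refine ⟨K.map (.sectR i V), hK.map.mono ?_⟩
    rw [SimpleGraph.map_le_iff_le_comap]
    exact fun v w h => ⟨rfl, h⟩

end DisjUnion

theorem clique_in_some_summand_iff_vertexDeletion_in_subdivision
    {t : ℕ} {V : Type*} [Fintype V] [DecidableEq V] (n m k d : ℕ) (hk : 2 ≤ k)
    (hd : 3 ≤ d - (k - 1)) (hn : Fintype.card V = n)
    (Gs : Fin t → SimpleGraph V) [∀ i, DecidableRel (Gs i).Adj]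
    (hreg : ∀ i : Fin t, ∀ v : V, ndeg (Gs i) v = d)
    (hm : ∀ i : Fin t, (Gs i).edgeSet.ncard = m) :
    (∃ i : Fin t, ∃ K : Finset V, (Gs i).IsNClique k K) ↔
      ∃ U : Finset ((Fin t × V) ⊕ (disjUnion Gs).edgeSet),
        U.card ≤ k * (k - 1) / 2 ∧
        ((Finset.univ \ U).val.map
            fun x => (((subdiv (disjUnion Gs)).neighborSet x) \ ↑U).ncard) =
          Multiset.replicate (n * t - k) d + Multiset.replicate k (d - (k - 1)) +
            Multiset.replicate (m * t - k * (k - 1) / 2) 2 := by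
  have hcard : Fintype.card (Fin t × V) = n * t := by
    rw [Fintype.card_prod, Fintype.card_fin, hn, mul_comm]
  have hedges : Fintype.card (disjUnion Gs).edgeSet = m * t := by
    rw [← Nat.card_eq_fintype_card, Nat.card_coe_set_eq, ncard_edgeSet_disjUnion]
    simp [hm, mul_comm]
  have hregular : ∀ x, ndeg (disjUnion Gs) x = d := fun (i, v) => by rw [ndeg_disjUnion, hreg]
  rw [← exists_isNClique_disjUnion_iff (by omega), ← Nat.choose_two_right, ← hcard, ← hedges]
  constructor
  · rintro ⟨K, hK⟩
    refine ⟨(edgesWithin _ K).map .inr, ?_,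
      degreesAfterDeletion_subdiv_edgesWithin_of_isNClique hregular hK⟩
    rw [card_map, card_edgesWithin_of_isClique hK.isClique, hK.card_eq]
  · rintro ⟨U, -, hU⟩
    exact exists_isNClique_of_degreesAfterDeletion_subdiv hk hd hregular hU
end
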